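/- Let β = √((5+√17)/2). Then the 3×3 real matrix [[−1/(β²+1), −√2·β/(β²+1), β²/(β²+1)], [−√2·β/(β²+1), −β²/(2(β²−1)), −√2·β/(β²+1)], [β²/(β²+1), −√2·β/(β²+1), −1/(β²+1)]] is symmetric and orthogonal; in particular its square is the 3×3 identity matrix. -/

import Mathlib

namespace AsaedaHaagerupStmt12

noncomputable def beta : ℝ := Real.sqrt ((5 + Real.sqrt 17) / 2)

noncomputable def U : Matrix (Fin 3) (Fin 3) ℝ :=
  !![-(1 / (beta ^ 2 + 1)),
       -(Real.sqrt 2 * beta / (beta ^ 2 + 1)),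
       beta ^ 2 / (beta ^ 2 + 1);
     -(Real.sqrt 2 * beta / (beta ^ 2 + 1)),
       -(beta ^ 2 / (2 * (beta ^ 2 - 1))),
       -(Real.sqrt 2 * beta / (beta ^ 2 + 1));
     beta ^ 2 / (beta ^ 2 + 1),
       -(Real.sqrt 2 * beta / (beta ^ 2 + 1)),
       -(1 / (beta ^ 2 + 1))]

/-!
`U` is the reflection fixing the line spanned by `(β, -√2, β)` and negating its orthogonal
complement. Only the central entry of `U` uses the particular value of `β`: it has the form required
of such a reflection because `β⁴ - 5β² + 2 = 0`.
-/

section LineReflection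

open Matrix

variable {n K : Type*} [Fintype n] [DecidableEq n] [Field K]

/-- The matrix of the reflection in the line spanned by `v`, the negative of the Householder matrix
of `v`: it fixes `v` and negates the orthogonal complement of `v`. If `v` is isotropic
(`v ⬝ᵥ v = 0`, division by zero) or `K` has characteristic two, the formula gives `-1`. -/
def lineReflection (v : n → K) : Matrix n n K :=
  (2 / (v ⬝ᵥ v)) • vecMulVec v v - 1

theorem isSymm_lineReflection (v : n → K) : (lineReflection v).IsSymm :=
  (IsSymm.smul (transpose_vecMulVec v v) _).sub isSymm_one

theorem lineReflection_mul_self (v : n → K) : lineReflection v * lineReflection v = 1 := by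
  rw [lineReflection]
  set c : K := 2 / (v ⬝ᵥ v) with hc
  set P : Matrix n n K := vecMulVec v v with hP
  have hPP : P * P = (v ⬝ᵥ v) • P := by
    rw [hP, vecMulVec_mul_vecMulVec, vecMulVec_smul]
  have hcoeff : c * c * (v ⬝ᵥ v) = c + c := by
    rcases eq_or_ne (v ⬝ᵥ v) 0 with h | h
    · simp [hc, h]
    · rw [hc]
      field_simp
      norm_num
  have hsq : (c • P) * (c • P) = c • P + c • P := by
    rw [smul_mul_smul_comm, hPP, smul_smul, hcoeff, add_smul]
  calc (c • P - 1) * (c • P - 1) = (c • P) * (c • P) - (c • P + c • P) + 1 := by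
        rw [sub_mul, mul_sub, one_mul, mul_one]
        abel
    _ = 1 := by rw [hsq, sub_self, zero_add]

theorem lineReflection_mem_orthogonalGroup (v : n → K) :
    lineReflection v ∈ orthogonalGroup n K := by
  rw [mem_orthogonalGroup_iff, (isSymm_lineReflection v).eq, lineReflection_mul_self]

end LineReflection

theorem beta_sq : beta ^ 2 = (5 + √17) / 2 :=
  Real.sq_sqrt (by positivity)

theorem one_lt_beta_sq : 1 < beta ^ 2 := by
  rw [beta_sq]
  linarith [Real.sqrt_nonneg 17]

theorem beta_quartic : beta ^ 4 - 5 * beta ^ 2 + 2 = 0 := by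
  have h17 : √17 ^ 2 = (17 : ℝ) := Real.sq_sqrt (by norm_num)
  calc beta ^ 4 - 5 * beta ^ 2 + 2 = (beta ^ 2) ^ 2 - 5 * beta ^ 2 + 2 := by ring
    _ = (√17 ^ 2 - 17) / 4 := by rw [beta_sq]; ring
    _ = 0 := by rw [h17]; norm_num

theorem beta_sq_div_two_mul_beta_sq_sub_one :
    beta ^ 2 / (2 * (beta ^ 2 - 1)) = (beta ^ 2 - 1) / (beta ^ 2 + 1) := by
  have hsub : 2 * (beta ^ 2 - 1) ≠ 0 := by linarith [one_lt_beta_sq]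
  have hadd : beta ^ 2 + 1 ≠ 0 := by positivity
  rw [div_eq_div_iff hsub hadd]
  linear_combination -beta_quartic

/-- A vector spanning the `1`-eigenspace of `U`. -/
noncomputable def axis : Fin 3 → ℝ := ![beta, -√2, beta]

theorem axis_dotProduct_self : axis ⬝ᵥ axis = 2 * (beta ^ 2 + 1) := by
  have hsqrt : √2 ^ 2 = (2 : ℝ) := Real.sq_sqrt (by norm_num)
  simp only [axis, Matrix.vec3_dotProduct']
  linear_combination hsqrt

theorem vecMulVec_axis_self :
    Matrix.vecMulVec axis axis =
      !![beta ^ 2, -(√2 * beta), beta ^ 2;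
         -(√2 * beta), 2, -(√2 * beta);
         beta ^ 2, -(√2 * beta), beta ^ 2] := by
  ext i j
  fin_cases i <;> fin_cases j <;> simp [axis, Matrix.vecMulVec, sq, mul_comm]

theorem U_eq_lineReflection : U = lineReflection axis := by
  have hscale : 2 / (axis ⬝ᵥ axis) = 1 / (beta ^ 2 + 1) := by
    rw [axis_dotProduct_self]
    field_simp
  have hcorner : 1 / (beta ^ 2 + 1) * beta ^ 2 - 1 = -(1 / (beta ^ 2 + 1)) := by
    field_simp
    ring
  have hcentre : 1 / (beta ^ 2 + 1) * 2 - 1 = -(beta ^ 2 / (2 * (beta ^ 2 - 1))) := by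
    rw [beta_sq_div_two_mul_beta_sq_sub_one]
    field_simp
    ring
  rw [lineReflection, hscale, vecMulVec_axis_self, U, ← hcorner, ← hcentre]
  ext i j
  fin_cases i <;> fin_cases j <;> simp [div_eq_inv_mul]

theorem asaeda_haagerup_stmt12 :
    U.IsSymm ∧ U ∈ Matrix.orthogonalGroup (Fin 3) ℝ ∧ U * U = 1 := by
  rw [U_eq_lineReflection]
  exact ⟨isSymm_lineReflection _, lineReflection_mem_orthogonalGroup _, lineReflection_mul_self _⟩

end AsaedaHaagerupStmt12
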